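/- (Height-preserving contraction in G) If the sequent A,A,Γ⇒Δ has a derivation in G of height at most n, then A,Γ⇒Δ has a derivation in G of height at most n; and if Γ⇒Δ,A,A has a derivation in G of height at most n, then Γ⇒Δ,A has a derivation in G of height at most n. -/

import Mathlib

/-- Terms: variables or individual constants (no function symbols). -/
inductive Tm where
  | var : ℕ → Tm
  | const : ℕ → Tm
deriving DecidableEq

/-- First-order formulas over a language with denumerably many predicates,
a logical identity predicate, ⊥, ⊤, ∧, ∨, →, ∀, ∃. -/
inductive Fm where
  | rel : ℕ → List Tm → Fm
  | eq : Tm → Tm → Fm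
  | bot : Fm
  | top : Fm
  | and : Fm → Fm → Fm
  | or : Fm → Fm → Fm
  | imp : Fm → Fm → Fm
  | all : ℕ → Fm → Fm
  | ex : ℕ → Fm → Fm
deriving DecidableEq

def Fm.isAtom : Fm → Prop
  | .rel _ _ => True
  | .eq _ _ => True
  | .bot => True
  | .top => True
  | _ => False

/-- Ter(A): the free variables and individual constants of A, as terms. -/
def Fm.ter : Fm → Finset Tm
  | .rel _ ts => ts.toFinset
  | .eq a b => {a, b}
  | .bot => ∅
  | .top => ∅
  | .and A B => A.ter ∪ B.ter
  | .or A B => A.ter ∪ B.ter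
  | .imp A B => A.ter ∪ B.ter
  | .all x A => A.ter.erase (Tm.var x)
  | .ex x A => A.ter.erase (Tm.var x)

/-- Rel(A): the non-logical predicate symbols of A (identity, ⊥, ⊤ are logical). -/
def Fm.rels : Fm → Finset ℕ
  | .rel r _ => {r}
  | .eq _ _ => ∅
  | .bot => ∅
  | .top => ∅
  | .and A B => A.rels ∪ B.rels
  | .or A B => A.rels ∪ B.rels
  | .imp A B => A.rels ∪ B.rels
  | .all _ A => A.rels
  | .ex _ A => A.rels

def Tm.consts : Tm → Finset ℕ
  | .var _ => ∅
  | .const c => {c}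

/-- The individual constants occurring in A. -/
def Fm.consts : Fm → Finset ℕ
  | .rel _ ts => ts.foldr (fun t s => t.consts ∪ s) ∅
  | .eq a b => a.consts ∪ b.consts
  | .bot => ∅
  | .top => ∅
  | .and A B => A.consts ∪ B.consts
  | .or A B => A.consts ∪ B.consts
  | .imp A B => A.consts ∪ B.consts
  | .all _ A => A.consts
  | .ex _ A => A.consts

/-- L(A) = Ter(A) ∪ Rel(A). -/
def Fm.lang (A : Fm) : Finset (Tm ⊕ ℕ) :=
  A.ter.image Sum.inl ∪ A.rels.image Sum.inr

/-- Ter of a multiset of formulas. -/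
def terM (Γ : Multiset Fm) : Finset Tm := (Γ.map Fm.ter).sup

/-- L of a multiset of formulas. -/
def langM (Γ : Multiset Fm) : Finset (Tm ⊕ ℕ) := (Γ.map Fm.lang).sup

/-- s[t/u]: substitute the term t for the term u (a variable or a constant) in s. -/
def Tm.subst (s u t : Tm) : Tm := if s = u then t else s

/-- A[t/u]: substitute the term t for the term u in A (bound occurrences
of a variable u are not replaced). -/
def Fm.subst : Fm → Tm → Tm → Fm
  | .rel r ts, u, t => .rel r (ts.map (fun s => s.subst u t))
  | .eq a b, u, t => .eq (a.subst u t) (b.subst u t)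
  | .bot, _, _ => .bot
  | .top, _, _ => .top
  | .and A B, u, t => .and (A.subst u t) (B.subst u t)
  | .or A B, u, t => .or (A.subst u t) (B.subst u t)
  | .imp A B, u, t => .imp (A.subst u t) (B.subst u t)
  | .all x A, u, t => if u = Tm.var x then .all x A else .all x (A.subst u t)
  | .ex x A, u, t => if u = Tm.var x then .ex x A else .ex x (A.subst u t)

/-- t is free for u in A (no free occurrence of u is in the scope of a
quantifier binding the variable t, if t is a variable). -/
def Fm.freeFor (t u : Tm) : Fm → Prop
  | .and A B => A.freeFor t u ∧ B.freeFor t u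
  | .or A B => A.freeFor t u ∧ B.freeFor t u
  | .imp A B => A.freeFor t u ∧ B.freeFor t u
  | .all x A => u ∉ (Fm.all x A).ter ∨ (t ≠ Tm.var x ∧ A.freeFor t u)
  | .ex x A => u ∉ (Fm.ex x A).ter ∨ (t ≠ Tm.var x ∧ A.freeFor t u)
  | _ => True

/-- Simultaneous substitution of terms for variables (used on atoms). -/
def Tm.applyσ (σ : ℕ → Tm) : Tm → Tm
  | .var x => σ x
  | .const c => .const c

def Fm.applyσ (σ : ℕ → Tm) : Fm → Fm
  | .rel r ts => .rel r (ts.map (Tm.applyσ σ))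
  | .eq a b => .eq (a.applyσ σ) (b.applyσ σ)
  | .bot => .bot
  | .top => .top
  | .and A B => .and (A.applyσ σ) (B.applyσ σ)
  | .or A B => .or (A.applyσ σ) (B.applyσ σ)
  | .imp A B => .imp (A.applyσ σ) (B.applyσ σ)
  | .all x A => .all x (A.applyσ σ)
  | .ex x A => .ex x (A.applyσ σ)

/-- A geometric rule, given by its principal atoms P₁,…,Pₙ (with free
variables x̄) and, for each of its m ≥ 1 premises, an atom Qᵢ together with
its eigenvariable yᵢ. It corresponds to the geometric axiom
∀x̄(P₁∧…∧Pₙ → ∃y₁Q₁ ∨ … ∨ ∃yₘQₘ). -/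
structure GeomRule where
  Ps : List Fm
  QYs : List (Fm × ℕ)
  QYs_ne : QYs ≠ []
  atomP : ∀ P ∈ Ps, P.isAtom
  atomQ : ∀ q ∈ QYs, q.1.isAtom

/-- Rel of a list of formulas. -/
def relsL (L : List Fm) : Finset ℕ := L.foldr (fun A s => A.rels ∪ s) ∅

/-- A singular geometric rule: no individual constants occur in it, and (⋆):
at most one non-logical predicate occurs among the Qᵢ's and Pⱼ's, and every
non-logical predicate of the Qᵢ's occurs among the Pⱼ's. -/
def GeomRule.Singular (R : GeomRule) : Prop :=
  (∀ P ∈ R.Ps, P.consts = ∅) ∧ (∀ q ∈ R.QYs, q.1.consts = ∅) ∧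
  (relsL R.Ps ∪ relsL (R.QYs.map Prod.fst)).card ≤ 1 ∧
  relsL (R.QYs.map Prod.fst) ⊆ relsL R.Ps

/-- The instantiated principal atoms P₁[σ],…,Pₙ[σ] of a geometric rule. -/
def GeomRule.inst (R : GeomRule) (σ : ℕ → Tm) : Multiset Fm :=
  ((R.Ps.map (Fm.applyσ σ) : List Fm) : Multiset Fm)

/-- `DerG Rules n Γ Δ`: the sequent Γ⇒Δ has a derivation of height at most n
in the calculus G3c extended with the geometric rules in `Rules`
(the plain calculus G is `DerG ∅`). -/
inductive DerG (Rules : Set GeomRule) : ℕ → Multiset Fm → Multiset Fm → Prop where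
  | ax {n : ℕ} {P : Fm} {Γ Δ : Multiset Fm} (h : P.isAtom) :
      DerG Rules n (P ::ₘ Γ) (P ::ₘ Δ)
  | botL {n : ℕ} {Γ Δ : Multiset Fm} : DerG Rules n (Fm.bot ::ₘ Γ) Δ
  | topR {n : ℕ} {Γ Δ : Multiset Fm} : DerG Rules n Γ (Fm.top ::ₘ Δ)
  | andL {n : ℕ} {A B : Fm} {Γ Δ : Multiset Fm} :
      DerG Rules n (A ::ₘ B ::ₘ Γ) Δ → DerG Rules (n + 1) (Fm.and A B ::ₘ Γ) Δ
  | andR {n : ℕ} {A B : Fm} {Γ Δ : Multiset Fm} :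
      DerG Rules n Γ (A ::ₘ Δ) → DerG Rules n Γ (B ::ₘ Δ) →
      DerG Rules (n + 1) Γ (Fm.and A B ::ₘ Δ)
  | orL {n : ℕ} {A B : Fm} {Γ Δ : Multiset Fm} :
      DerG Rules n (A ::ₘ Γ) Δ → DerG Rules n (B ::ₘ Γ) Δ →
      DerG Rules (n + 1) (Fm.or A B ::ₘ Γ) Δ
  | orR {n : ℕ} {A B : Fm} {Γ Δ : Multiset Fm} :
      DerG Rules n Γ (A ::ₘ B ::ₘ Δ) → DerG Rules (n + 1) Γ (Fm.or A B ::ₘ Δ)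
  | impL {n : ℕ} {A B : Fm} {Γ Δ : Multiset Fm} :
      DerG Rules n Γ (A ::ₘ Δ) → DerG Rules n (B ::ₘ Γ) Δ →
      DerG Rules (n + 1) (Fm.imp A B ::ₘ Γ) Δ
  | impR {n : ℕ} {A B : Fm} {Γ Δ : Multiset Fm} :
      DerG Rules n (A ::ₘ Γ) (B ::ₘ Δ) → DerG Rules (n + 1) Γ (Fm.imp A B ::ₘ Δ)
  | allL {n : ℕ} {x : ℕ} {A : Fm} {t : Tm} {Γ Δ : Multiset Fm}
      (hfree : A.freeFor t (Tm.var x)) :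
      DerG Rules n (A.subst (Tm.var x) t ::ₘ Fm.all x A ::ₘ Γ) Δ →
      DerG Rules (n + 1) (Fm.all x A ::ₘ Γ) Δ
  | allR {n : ℕ} {x y : ℕ} {A : Fm} {Γ Δ : Multiset Fm}
      (hfree : A.freeFor (Tm.var y) (Tm.var x))
      (hy : Tm.var y ∉ terM Γ ∪ terM Δ ∪ (Fm.all x A).ter) :
      DerG Rules n Γ (A.subst (Tm.var x) (Tm.var y) ::ₘ Δ) →
      DerG Rules (n + 1) Γ (Fm.all x A ::ₘ Δ)
  | exL {n : ℕ} {x y : ℕ} {A : Fm} {Γ Δ : Multiset Fm}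
      (hfree : A.freeFor (Tm.var y) (Tm.var x))
      (hy : Tm.var y ∉ terM Γ ∪ terM Δ ∪ (Fm.ex x A).ter) :
      DerG Rules n (A.subst (Tm.var x) (Tm.var y) ::ₘ Γ) Δ →
      DerG Rules (n + 1) (Fm.ex x A ::ₘ Γ) Δ
  | exR {n : ℕ} {x : ℕ} {A : Fm} {t : Tm} {Γ Δ : Multiset Fm}
      (hfree : A.freeFor t (Tm.var x)) :
      DerG Rules n Γ (Fm.ex x A ::ₘ A.subst (Tm.var x) t ::ₘ Δ) →
      DerG Rules (n + 1) Γ (Fm.ex x A ::ₘ Δ)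
  | geom {n : ℕ} {R : GeomRule} {σ : ℕ → Tm} {Γ Δ : Multiset Fm} (hR : R ∈ Rules)
      (hfresh : ∀ q ∈ R.QYs, ∃ z : ℕ, σ q.2 = Tm.var z ∧
          Tm.var z ∉ terM (R.inst σ + Γ) ∪ terM Δ)
      (hprem : ∀ q ∈ R.QYs, DerG Rules n (Fm.applyσ σ q.1 ::ₘ (R.inst σ + Γ)) Δ) :
      DerG Rules (n + 1) (R.inst σ + Γ) Δ

/-- Γ⇒Δ is derivable in G + Rules. -/
def Derivable (Rules : Set GeomRule) (Γ Δ : Multiset Fm) : Prop :=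
  ∃ n, DerG Rules n Γ Δ

/-- C is a split-interpolant of the partition Γ₁;Γ₂⇒Δ₁;Δ₂ in G + Rules. -/
def SplitInterpolant (Rules : Set GeomRule) (Γ₁ Γ₂ Δ₁ Δ₂ : Multiset Fm) (C : Fm) : Prop :=
  Derivable Rules Γ₁ (C ::ₘ Δ₁) ∧ Derivable Rules (C ::ₘ Γ₂) Δ₂ ∧
  C.lang ⊆ langM (Γ₁ + Δ₁) ∩ langM (Γ₂ + Δ₂)
/-- Disjunction C₁ ∨ … ∨ Cₘ of a list of formulas. -/
def disj : List Fm → Fm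
  | [] => Fm.bot
  | [C] => C
  | C :: L => Fm.or C (disj L)

/-- Conjunction C₁ ∧ … ∧ Cₘ of a list of formulas. -/
def conj : List Fm → Fm
  | [] => Fm.top
  | [C] => C
  | C :: L => Fm.and C (conj L)

/-- A[z̄/t̄]: successively substitute the variable zᵢ for the term tᵢ. -/
def Fm.substPairs : Fm → List (Tm × ℕ) → Fm
  | A, [] => A
  | A, (t, z) :: L => (A.subst t (Tm.var z)).substPairs L

/-- ∀z̄ A. -/
def foralls (zs : List ℕ) (A : Fm) : Fm := zs.foldr Fm.all A

/-- ∃z̄ A. -/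
def exs (zs : List ℕ) (A : Fm) : Fm := zs.foldr Fm.ex A

/-!
Contraction is proved by induction on the height. If the contracted formula is principal in a rule
that decomposes it, height-preserving inversion decomposes its second copy, and the induction
hypothesis contracts the resulting duplicates; the other rules, `L∀` and `R∃`, repeat their
principal formula, so the induction hypothesis applies to their premise directly.

The argument runs in an auxiliary calculus on multisets of signed formulas, in which the ten rules
of `G` become two. There the eigenvariable rules have one premise for each variable outside some
finite set, so that the context of a rule can be changed without renaming its eigenvariable.
Height-preserving substitution shows that the two calculi derive the same sequents.
-/

/-! ### Duplicates in multisets -/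

theorem cons_eq_cons_cons {α : Type*} {a b : α} {s t : Multiset α} (h : b ::ₘ t = a ::ₘ a ::ₘ s) :
    (b = a ∧ t = a ::ₘ s) ∨ ∃ u, s = b ::ₘ u ∧ t = a ::ₘ a ::ₘ u := by
  rcases Multiset.cons_eq_cons.1 h with h | ⟨hba, v, rfl, hv⟩
  · exact Or.inl h
  · rcases Multiset.cons_eq_cons.1 hv with ⟨hab, -⟩ | ⟨-, u, rfl, rfl⟩
    · exact absurd hab.symm hba
    · exact Or.inr ⟨u, rfl, rfl⟩

theorem of_add_add_of_cons_cons {α : Type*} {P : Multiset α → Prop}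
    (contract : ∀ a s, P (a ::ₘ a ::ₘ s) → P (a ::ₘ s)) (p s : Multiset α)
    (h : P (p + (p + s))) : P (p + s) := by
  induction p using Multiset.induction generalizing s with
  | empty => simpa using h
  | cons a p ih =>
    simp only [Multiset.cons_add, Multiset.add_cons] at h ⊢
    rw [← Multiset.add_cons]
    refine ih _ ?_
    simp only [Multiset.add_cons]
    exact contract a _ h

/-! ### Substitution in terms and formulas -/

namespace Tm

variable {s u : Tm}

theorem subst_of_ne (t : Tm) (h : s ≠ u) : s.subst u t = s := if_neg h

theorem subst_self_left (u t : Tm) : u.subst u t = t := if_pos rfl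

theorem subst_self_right (s u : Tm) : s.subst u u = s := by
  unfold subst
  split_ifs with h
  exacts [h.symm, rfl]

theorem exists_var_notMem (T : Finset Tm) : ∃ w, Tm.var w ∉ T := by
  have var_injective : Function.Injective Tm.var := fun _ _ => Tm.var.inj
  obtain ⟨w, hw⟩ := Infinite.exists_notMem_finset (T.preimage Tm.var var_injective.injOn)
  exact ⟨w, by simpa using hw⟩

end Tm

namespace Fm

variable {A : Fm} {p s t u : Tm} {x : ℕ}

/-- The variables bound by some quantifier of a formula; like `Fm.ter`, a set of terms. A term
outside of it can be substituted into the formula without capture. -/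
def boundVars : Fm → Finset Tm
  | .and A B => A.boundVars ∪ B.boundVars
  | .or A B => A.boundVars ∪ B.boundVars
  | .imp A B => A.boundVars ∪ B.boundVars
  | .all x A => insert (Tm.var x) A.boundVars
  | .ex x A => insert (Tm.var x) A.boundVars
  | _ => ∅

theorem boundVars_subst (A : Fm) (u t : Tm) : (A.subst u t).boundVars = A.boundVars := by
  induction A with
  | all x A ih | ex x A ih => simp only [subst]; split_ifs <;> simp [boundVars, ih]
  | _ => simp_all [subst, boundVars]

theorem subst_self (A : Fm) (u : Tm) : A.subst u u = A := by
  induction A with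
  | all x A ih | ex x A ih => simp only [subst]; split_ifs <;> simp [ih]
  | _ => simp_all [subst, Tm.subst_self_right]

theorem subst_of_notMem_ter (t : Tm) (h : u ∉ A.ter) : A.subst u t = A := by
  induction A with
  | rel r ts =>
    simp only [ter, List.mem_toFinset] at h
    simp only [subst, rel.injEq, true_and]
    exact (List.map_congr_left fun s hs => Tm.subst_of_ne t (ne_of_mem_of_not_mem hs h)).trans
      ts.map_id
  | eq a b =>
    simp only [ter, Finset.mem_insert, Finset.mem_singleton, not_or] at h
    simp [subst, Tm.subst_of_ne t (Ne.symm h.1), Tm.subst_of_ne t (Ne.symm h.2)]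
  | all x A ih | ex x A ih => simp only [subst]; split_ifs <;> simp_all [ter]
  | _ => simp_all [subst, ter]

theorem notMem_ter_subst (h : p ∉ A.ter) (hp : p ≠ t) : p ∉ (A.subst u t).ter := by
  have ne_subst (s : Tm) (hs : p ≠ s) : p ≠ s.subst u t := by
    unfold Tm.subst
    split_ifs <;> assumption
  induction A with
  | rel r ts =>
    simp only [subst, ter, List.mem_toFinset, List.mem_map, not_exists, not_and] at h ⊢
    exact fun s hs e => ne_subst s (ne_of_mem_of_not_mem hs h).symm e.symm
  | eq a b =>
    simp only [subst, ter, Finset.mem_insert, Finset.mem_singleton, not_or] at h ⊢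
    exact ⟨ne_subst a h.1, ne_subst b h.2⟩
  | all x A ih | ex x A ih =>
    simp only [subst]
    split_ifs
    · exact h
    · simp only [ter, Finset.mem_erase, not_and] at h ⊢
      exact fun hx => ih (h hx)
  | _ => simp_all [subst, ter]

theorem freeFor_of_notMem_ter (t : Tm) (h : u ∉ A.ter) : A.freeFor t u := by
  induction A with
  | all x A | ex x A => exact Or.inl h
  | _ => simp_all [freeFor, ter]

theorem freeFor_of_notMem_boundVars (u : Tm) (h : t ∉ A.boundVars) : A.freeFor t u := by
  induction A with
  | _ => simp_all [freeFor, boundVars]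

theorem freeFor_of_freeFor_all (h : (all x A).freeFor t u) (hu : u ≠ .var x) : A.freeFor t u := by
  rcases h with hu' | ⟨-, hA⟩
  · exact freeFor_of_notMem_ter t (by simpa [ter, hu] using hu')
  · exact hA

theorem freeFor_subst_of_ne (h : A.freeFor s p) (ht : t ≠ p) : (A.subst u t).freeFor s p := by
  induction A with
  | all x A ih | ex x A ih =>
    rcases h with hp | ⟨hs, hA⟩
    · exact freeFor_of_notMem_ter s (notMem_ter_subst hp ht.symm)
    · simp only [subst]
      split_ifs
      · exact Or.inr ⟨hs, hA⟩
      · exact Or.inr ⟨hs, ih hA⟩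
  | _ => simp_all [freeFor, subst]

theorem freeFor_subst_subst (h : A.freeFor s p) (htA : t ∉ A.boundVars) (htp : t ≠ p) :
    (A.subst u t).freeFor (s.subst u t) p := by
  by_cases hs : s = u
  · subst hs
    rw [Tm.subst_self_left]
    exact freeFor_of_notMem_boundVars p (by rwa [boundVars_subst])
  · rw [Tm.subst_of_ne t hs]
    exact freeFor_subst_of_ne h htp

theorem subst_subst_comm (h : A.freeFor s p) (hup : u ≠ p) (htp : t ≠ p) :
    (A.subst p s).subst u t = (A.subst u t).subst p (s.subst u t) := by
  have tm_comm (r : Tm) :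
      (r.subst p s).subst u t = (r.subst u t).subst p (s.subst u t) := by
    unfold Tm.subst
    grind
  induction A with
  | all x A ih | ex x A ih =>
    by_cases hpx : p = .var x
    · have hux : u ≠ .var x := hpx ▸ hup
      simp [subst, hpx, hux]
    have hA : A.freeFor s p := freeFor_of_freeFor_all h hpx
    by_cases hux : u = .var x
    · simp only [subst, hpx, hux, if_true, if_false, all.injEq, ex.injEq, true_and]
      rcases h with hp | ⟨hs, -⟩
      · have hpA : p ∉ A.ter := by simpa [ter, hpx] using hp
        rw [subst_of_notMem_ter _ hpA, subst_of_notMem_ter _ hpA]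
      · rw [Tm.subst_of_ne t hs]
    · simp [subst, hpx, hux, ih hA]
  | _ => simp_all [freeFor, subst]

theorem subst_subst_self (h : A.freeFor s p) :
    (A.subst p s).subst p t = A.subst p (s.subst p t) := by
  have tm_subst_subst_self (r : Tm) : (r.subst p s).subst p t = r.subst p (s.subst p t) := by
    unfold Tm.subst
    grind
  induction A with
  | all x A ih | ex x A ih =>
    by_cases hpx : p = .var x
    · simp [subst, hpx]
    · simp [subst, hpx, ih (freeFor_of_freeFor_all h hpx)]
  | _ => simp_all [freeFor, subst]

theorem subst_eigenvariable (h : A.freeFor u (.var x)) (hu : u ∉ (all x A).ter)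
    (ht : t ≠ .var x) : (A.subst (.var x) u).subst u t = A.subst (.var x) t := by
  by_cases hux : u = .var x
  · rw [hux, subst_self]
  · have huA : u ∉ A.ter := by simpa [ter, hux] using hu
    rw [subst_subst_comm h hux ht, subst_of_notMem_ter t huA, Tm.subst_self_left]

/-- The body of the result of substituting `t` for `u` in `∀xA` or `∃xA`: an occurrence of the
bound variable `x` is not replaced. -/
def substBody (x : ℕ) (A : Fm) (u t : Tm) : Fm := if u = .var x then A else A.subst u t

theorem subst_all (x : ℕ) (A : Fm) (u t : Tm) :
    (all x A).subst u t = all x (substBody x A u t) := by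
  simp only [subst, substBody]
  split_ifs <;> rfl

theorem subst_ex (x : ℕ) (A : Fm) (u t : Tm) :
    (ex x A).subst u t = ex x (substBody x A u t) := by
  simp only [subst, substBody]
  split_ifs <;> rfl

theorem subst_subst_body (h : A.freeFor s (.var x)) (ht : t ≠ .var x) :
    (A.subst (.var x) s).subst u t = (substBody x A u t).subst (.var x) (s.subst u t) := by
  unfold substBody
  split_ifs with hu
  · rw [hu, subst_subst_self h]
  · exact subst_subst_comm h hu ht

theorem freeFor_substBody (h : A.freeFor s (.var x)) (ht : t ∉ (all x A).boundVars) :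
    (substBody x A u t).freeFor (s.subst u t) (.var x) := by
  obtain ⟨htx, htA⟩ : t ≠ .var x ∧ t ∉ A.boundVars := by simpa [boundVars] using ht
  unfold substBody
  split_ifs with hu
  · by_cases hs : s = u
    · rw [hs, Tm.subst_self_left]
      exact freeFor_of_notMem_boundVars _ htA
    · rwa [Tm.subst_of_ne t hs]
  · exact freeFor_subst_subst h htA htx

end Fm

/-! ### Signed formulas -/

/-- A formula together with the side of the sequent on which it stands. -/
inductive SignedFm where
  | left : Fm → SignedFm
  | right : Fm → SignedFm

namespace SignedFm

variable {c d : SignedFm} {t u : Tm} {K L : Finset Tm} {p : Multiset SignedFm}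

/-- The underlying formula, with its side forgotten. -/
def fm : SignedFm → Fm
  | left A => A
  | right A => A

/-- Substitution of `t` for `u` in a signed formula; the formula comes last so that the
substitution can be mapped over a sequent. -/
def subst (u t : Tm) : SignedFm → SignedFm
  | left A => left (A.subst u t)
  | right A => right (A.subst u t)

theorem subst_of_notMem_ter (t : Tm) (h : u ∉ c.fm.ter) : c.subst u t = c := by
  cases c <;> exact congrArg _ (Fm.subst_of_notMem_ter t h)

/-- The signed formulas that are principal in an invertible rule of `G` whose premises do not
repeat them: all but the atoms, `∀` on the left and `∃` on the right. -/
def IsInvertible : SignedFm → Prop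
  | left (.and _ _) | left (.or _ _) | left (.imp _ _) | left (.ex _ _) => True
  | right (.and _ _) | right (.or _ _) | right (.imp _ _) | right (.all _ _) => True
  | _ => False

/-- `c.IsComponent L p`: in some premise of the invertible rule with principal formula `c`, the
formulas of `p` replace `c`. The eigenvariable rules have a premise for every variable outside
`L`. -/
inductive IsComponent (L : Finset Tm) : SignedFm → Multiset SignedFm → Prop
  | leftAnd {A B : Fm} : IsComponent L (left (.and A B)) {left A, left B}
  | rightAnd₁ {A B : Fm} : IsComponent L (right (.and A B)) {right A}
  | rightAnd₂ {A B : Fm} : IsComponent L (right (.and A B)) {right B}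
  | leftOr₁ {A B : Fm} : IsComponent L (left (.or A B)) {left A}
  | leftOr₂ {A B : Fm} : IsComponent L (left (.or A B)) {left B}
  | rightOr {A B : Fm} : IsComponent L (right (.or A B)) {right A, right B}
  | leftImp₁ {A B : Fm} : IsComponent L (left (.imp A B)) {right A}
  | leftImp₂ {A B : Fm} : IsComponent L (left (.imp A B)) {left B}
  | rightImp {A B : Fm} : IsComponent L (right (.imp A B)) {left A, right B}
  | rightAll {x y : ℕ} {A : Fm} (hy : Tm.var y ∉ L) :
      IsComponent L (right (.all x A)) {right (A.subst (.var x) (.var y))}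
  | leftEx {x y : ℕ} {A : Fm} (hy : Tm.var y ∉ L) :
      IsComponent L (left (.ex x A)) {left (A.subst (.var x) (.var y))}

/-- `c.IsInstance d`: the rule `L∀` or `R∃` with principal formula `c` can add `d`. -/
inductive IsInstance : SignedFm → SignedFm → Prop
  | all {x : ℕ} {A : Fm} {t : Tm} (h : A.freeFor t (.var x)) :
      IsInstance (left (.all x A)) (left (A.subst (.var x) t))
  | ex {x : ℕ} {A : Fm} {t : Tm} (h : A.freeFor t (.var x)) :
      IsInstance (right (.ex x A)) (right (A.subst (.var x) t))

theorem IsInvertible.not_isAtom (hc : c.IsInvertible) : ¬ c.fm.isAtom := by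
  rcases c with A | A <;> cases A <;> simp_all [IsInvertible, fm, Fm.isAtom]

theorem IsInvertible.subst (u t : Tm) (hc : c.IsInvertible) : (c.subst u t).IsInvertible := by
  rcases c with A | A <;> cases A <;>
    simp only [SignedFm.subst, Fm.subst_all, Fm.subst_ex] <;> exact hc

theorem IsInstance.not_isInvertible (h : c.IsInstance d) : ¬ c.IsInvertible := by
  cases h <;> exact id

theorem IsInstance.boundVars_subset (h : c.IsInstance d) : d.fm.boundVars ⊆ c.fm.boundVars := by
  cases h <;> simp [fm, Fm.boundVars, Fm.boundVars_subst]

theorem IsInstance.subst (u : Tm) (h : c.IsInstance d) (ht : t ∉ c.fm.boundVars) :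
    (c.subst u t).IsInstance (d.subst u t) := by
  cases h with
  | all h | ex h =>
    have htx : t ≠ .var _ := fun e => ht (e ▸ Finset.mem_insert_self _ _)
    simp only [SignedFm.subst, Fm.subst_all, Fm.subst_ex, Fm.subst_subst_body h htx]
    constructor
    exact Fm.freeFor_substBody h ht

theorem IsComponent.anti (hKL : K ⊆ L) (hp : c.IsComponent L p) : c.IsComponent K p := by
  cases hp
  case rightAll hy => exact .rightAll (Finset.notMem_mono hKL hy)
  case leftEx hy => exact .leftEx (Finset.notMem_mono hKL hy)
  all_goals constructor

theorem IsComponent.boundVars_subset (hp : c.IsComponent L p) (hd : d ∈ p) :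
    d.fm.boundVars ⊆ c.fm.boundVars := by
  cases hp <;> simp only [Multiset.insert_eq_cons, Multiset.mem_cons, Multiset.mem_singleton] at hd
    <;> (try rcases hd with rfl | rfl) <;> simp_all [fm, Fm.boundVars, Fm.boundVars_subst]

theorem IsComponent.exists_of_subst (ht : t ∉ c.fm.boundVars)
    (hp : (c.subst u t).IsComponent (insert u (L ∪ c.fm.boundVars)) p) :
    ∃ q, c.IsComponent L q ∧ q.map (subst u t) = p := by
  rcases c with A | A <;> cases A <;>
    simp only [subst, Fm.subst_all, Fm.subst_ex] at hp <;> cases hp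
  case left.ex.leftEx x A y hy | right.all.rightAll x A y hy =>
    simp only [fm, Fm.boundVars, Finset.mem_insert, Finset.mem_union, not_or] at ht hy
    obtain ⟨hyu, hyL, -, hyA⟩ := hy
    have subst_body : (A.subst (.var x) (.var y)).subst u t =
        (Fm.substBody x A u t).subst (.var x) (.var y) := by
      rw [Fm.subst_subst_body (Fm.freeFor_of_notMem_boundVars _ hyA) ht.1, Tm.subst_of_ne t hyu]
    exact ⟨_, by constructor; exact hyL, by simp [subst, subst_body]⟩
  case left.and.leftAnd => exact ⟨_, .leftAnd, by simp [subst]⟩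
  case right.and.rightAnd₁ => exact ⟨_, .rightAnd₁, by simp [subst]⟩
  case right.and.rightAnd₂ => exact ⟨_, .rightAnd₂, by simp [subst]⟩
  case left.or.leftOr₁ => exact ⟨_, .leftOr₁, by simp [subst]⟩
  case left.or.leftOr₂ => exact ⟨_, .leftOr₂, by simp [subst]⟩
  case right.or.rightOr => exact ⟨_, .rightOr, by simp [subst]⟩
  case left.imp.leftImp₁ => exact ⟨_, .leftImp₁, by simp [subst]⟩
  case left.imp.leftImp₂ => exact ⟨_, .leftImp₂, by simp [subst]⟩
  case right.imp.rightImp => exact ⟨_, .rightImp, by simp [subst]⟩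

/-- `w` is a fresh eigenvariable, and `v` that of `p`. In a rule without eigenvariable, renaming the
fresh `w` changes nothing, so that any `v` will do. -/
theorem IsComponent.exists_map_subst_eq {w : ℕ} (hwL : .var w ∉ L) (hwc : .var w ∉ c.fm.ter)
    (hwb : .var w ∉ c.fm.boundVars) (hK : c.fm.boundVars ⊆ K) (hp : c.IsComponent K p) :
    ∃ v ∉ K, ∃ q, c.IsComponent L q ∧ q.map (subst (.var w) v) = p := by
  cases hp
  case leftEx x v A hv | rightAll x v A hv =>
    have hvx : Tm.var v ≠ .var x := fun e => hv (hK (e ▸ Finset.mem_insert_self _ _))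
    have hwA : A.freeFor (.var w) (.var x) :=
      Fm.freeFor_of_notMem_boundVars _ fun h => hwb (Finset.mem_insert_of_mem h)
    refine ⟨_, hv, _, by constructor; exact hwL, ?_⟩
    simp [subst, Fm.subst_eigenvariable hwA hwc hvx]
  all_goals
    obtain ⟨v, hv⟩ := Tm.exists_var_notMem K
    simp only [fm, Fm.ter, Finset.mem_union, not_or] at hwc
  case leftAnd => exact ⟨_, hv, _, .leftAnd, by simp [subst, Fm.subst_of_notMem_ter, hwc]⟩
  case rightAnd₁ => exact ⟨_, hv, _, .rightAnd₁, by simp [subst, Fm.subst_of_notMem_ter, hwc]⟩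
  case rightAnd₂ => exact ⟨_, hv, _, .rightAnd₂, by simp [subst, Fm.subst_of_notMem_ter, hwc]⟩
  case leftOr₁ => exact ⟨_, hv, _, .leftOr₁, by simp [subst, Fm.subst_of_notMem_ter, hwc]⟩
  case leftOr₂ => exact ⟨_, hv, _, .leftOr₂, by simp [subst, Fm.subst_of_notMem_ter, hwc]⟩
  case rightOr => exact ⟨_, hv, _, .rightOr, by simp [subst, Fm.subst_of_notMem_ter, hwc]⟩
  case leftImp₁ => exact ⟨_, hv, _, .leftImp₁, by simp [subst, Fm.subst_of_notMem_ter, hwc]⟩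
  case leftImp₂ => exact ⟨_, hv, _, .leftImp₂, by simp [subst, Fm.subst_of_notMem_ter, hwc]⟩
  case rightImp => exact ⟨_, hv, _, .rightImp, by simp [subst, Fm.subst_of_notMem_ter, hwc]⟩

end SignedFm

/-! ### Sequents of signed formulas -/

/-- A two-sided sequent `Γ ⇒ Δ`, as a single multiset of signed formulas. -/
abbrev SignedSequent := Multiset SignedFm

namespace SignedSequent

open SignedFm

variable {n : ℕ} {c d : SignedFm} {S T p : SignedSequent} {t u : Tm} {A : Fm} {L : Finset Tm}
  {Rules : Set GeomRule}

/-- The signed sequent corresponding to `Γ ⇒ Δ`. -/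
def ofSides (Γ Δ : Multiset Fm) : SignedSequent := Γ.map left + Δ.map right

/-- The left-hand side of a signed sequent. -/
def antecedent (S : SignedSequent) : Multiset Fm :=
  S.filterMap fun | left A => some A | right _ => none

/-- The right-hand side of a signed sequent. -/
def succedent (S : SignedSequent) : Multiset Fm :=
  S.filterMap fun | left _ => none | right A => some A

@[simp]
theorem ofSides_cons_left (A : Fm) (Γ Δ : Multiset Fm) :
    ofSides (A ::ₘ Γ) Δ = left A ::ₘ ofSides Γ Δ := by
  simp [ofSides]

@[simp]
theorem ofSides_cons_right (A : Fm) (Γ Δ : Multiset Fm) :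
    ofSides Γ (A ::ₘ Δ) = right A ::ₘ ofSides Γ Δ := by
  simp [ofSides]

@[simp]
theorem antecedent_left_cons (A : Fm) (S : SignedSequent) :
    antecedent (left A ::ₘ S) = A ::ₘ antecedent S :=
  Multiset.filterMap_cons_some _ _ _ rfl

@[simp]
theorem antecedent_right_cons (A : Fm) (S : SignedSequent) :
    antecedent (right A ::ₘ S) = antecedent S :=
  Multiset.filterMap_cons_none _ _ rfl

@[simp]
theorem succedent_left_cons (A : Fm) (S : SignedSequent) :
    succedent (left A ::ₘ S) = succedent S :=
  Multiset.filterMap_cons_none _ _ rfl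

@[simp]
theorem succedent_right_cons (A : Fm) (S : SignedSequent) :
    succedent (right A ::ₘ S) = A ::ₘ succedent S :=
  Multiset.filterMap_cons_some _ _ _ rfl

theorem antecedent_ofSides (Γ Δ : Multiset Fm) : antecedent (ofSides Γ Δ) = Γ := by
  induction Δ using Multiset.induction with
  | empty =>
    induction Γ using Multiset.induction with
    | empty => rfl
    | cons A Γ ih => rw [ofSides_cons_left, antecedent_left_cons, ih]
  | cons A Δ ih => rw [ofSides_cons_right, antecedent_right_cons, ih]

theorem succedent_ofSides (Γ Δ : Multiset Fm) : succedent (ofSides Γ Δ) = Δ := by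
  induction Γ using Multiset.induction with
  | empty =>
    induction Δ using Multiset.induction with
    | empty => rfl
    | cons A Δ ih => rw [ofSides_cons_right, succedent_right_cons, ih]
  | cons A Γ ih => rw [ofSides_cons_left, succedent_left_cons, ih]

theorem mem_antecedent : A ∈ antecedent S ↔ left A ∈ S := by
  rw [antecedent, Multiset.mem_filterMap]
  constructor
  · rintro ⟨_ | _, h, ⟨⟩⟩
    exact h
  · exact fun h => ⟨_, h, rfl⟩

theorem mem_succedent : A ∈ succedent S ↔ right A ∈ S := by
  rw [succedent, Multiset.mem_filterMap]
  constructor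
  · rintro ⟨_ | _, h, ⟨⟩⟩
    exact h
  · exact fun h => ⟨_, h, rfl⟩

/-- The free variables and individual constants of a signed sequent; an eigenvariable must lie
outside of it. -/
def ter (S : SignedSequent) : Finset Tm := terM (antecedent S) ∪ terM (succedent S)

/-- The variables bound in some formula of a signed sequent. -/
def boundVars (S : SignedSequent) : Finset Tm := (S.map fun c => c.fm.boundVars).sup

theorem ter_ofSides (Γ Δ : Multiset Fm) : ter (ofSides Γ Δ) = terM Γ ∪ terM Δ := by
  rw [ter, antecedent_ofSides, succedent_ofSides]

theorem ter_cons (c : SignedFm) (S : SignedSequent) : ter (c ::ₘ S) = c.fm.ter ∪ ter S := by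
  cases c <;> simp [ter, terM, fm, antecedent_left_cons, antecedent_right_cons, succedent_left_cons,
    succedent_right_cons, Finset.union_assoc, Finset.union_left_comm]

theorem boundVars_cons (c : SignedFm) (S : SignedSequent) :
    boundVars (c ::ₘ S) = c.fm.boundVars ∪ boundVars S := by
  simp [boundVars]

theorem boundVars_add (S T : SignedSequent) : boundVars (S + T) = boundVars S ∪ boundVars T := by
  simp [boundVars]

theorem boundVars_add_subset (hp : c.IsComponent L p) (S : SignedSequent) :
    boundVars (p + S) ⊆ boundVars (c ::ₘ S) := by
  have hpc : boundVars p ⊆ c.fm.boundVars :=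
    Multiset.sup_le.2 (by simpa using fun d hd => hp.boundVars_subset hd)
  rw [boundVars_add, boundVars_cons]
  exact Finset.union_subset_union_left hpc

theorem boundVars_cons_cons_subset (hd : c.IsInstance d) (S : SignedSequent) :
    boundVars (d ::ₘ c ::ₘ S) ⊆ boundVars (c ::ₘ S) := by
  rw [boundVars_cons]
  refine Finset.union_subset (hd.boundVars_subset.trans ?_) subset_rfl
  simp [boundVars_cons]

theorem map_subst_of_notMem_ter (t : Tm) (h : u ∉ ter S) : S.map (subst u t) = S := by
  induction S using Multiset.induction with
  | empty => rfl
  | cons c S ih =>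
    rw [ter_cons, Finset.notMem_union] at h
    rw [Multiset.map_cons, subst_of_notMem_ter t h.1, ih h.2]

/-- The initial sequents of `G`. -/
def IsInitial (S : SignedSequent) : Prop :=
  (∃ P : Fm, P.isAtom ∧ left P ∈ S ∧ right P ∈ S) ∨ left .bot ∈ S ∨ right .top ∈ S

theorem IsInitial.of_atoms_subset (h : IsInitial S) (hST : ∀ c ∈ S, c.fm.isAtom → c ∈ T) :
    IsInitial T := by
  rcases h with ⟨P, hP, hl, hr⟩ | hbot | htop
  · exact Or.inl ⟨P, hP, hST _ hl hP, hST _ hr hP⟩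
  · exact Or.inr (Or.inl (hST _ hbot trivial))
  · exact Or.inr (Or.inr (hST _ htop trivial))

theorem IsInitial.map_subst (u t : Tm) (h : IsInitial S) : IsInitial (S.map (subst u t)) := by
  have mem_map {c : SignedFm} (hc : c ∈ S) : c.subst u t ∈ S.map (subst u t) :=
    Multiset.mem_map_of_mem _ hc
  rcases h with ⟨P, hP, hl, hr⟩ | hbot | htop
  · refine Or.inl ⟨P.subst u t, ?_, mem_map hl, mem_map hr⟩
    cases P <;> first | exact hP | exact hP.elim
  · exact Or.inr (Or.inl (mem_map hbot))
  · exact Or.inr (Or.inr (mem_map htop))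

theorem IsInitial.derG (h : IsInitial S) : DerG Rules n (antecedent S) (succedent S) := by
  simp only [IsInitial, ← mem_antecedent, ← mem_succedent] at h
  rcases h with ⟨P, hP, hl, hr⟩ | hbot | htop
  · rw [← Multiset.cons_erase hl, ← Multiset.cons_erase hr]
    exact .ax hP
  · rw [← Multiset.cons_erase hbot]
    exact .botL
  · rw [← Multiset.cons_erase htop]
    exact .topR

theorem derG_cons_of_isInvertible (hc : c.IsInvertible)
    (h : ∀ p, c.IsComponent L p → DerG Rules n (antecedent (p + S)) (succedent (p + S))) :
    DerG Rules (n + 1) (antecedent (c ::ₘ S)) (succedent (c ::ₘ S)) := by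
  obtain ⟨y, hy⟩ := Tm.exists_var_notMem (L ∪ c.fm.ter ∪ c.fm.boundVars ∪ ter S)
  simp only [Finset.mem_union, not_or] at hy
  obtain ⟨⟨⟨hyL, hyc⟩, hyb⟩, hyS⟩ := hy
  have hfree {x : ℕ} {A : Fm} (hA : A.boundVars ⊆ c.fm.boundVars) : A.freeFor (.var y) (.var x) :=
    Fm.freeFor_of_notMem_boundVars _ (Finset.notMem_mono hA hyb)
  have hfresh : .var y ∉ terM (antecedent S) ∪ terM (succedent S) ∪ c.fm.ter :=
    Finset.notMem_union.2 ⟨hyS, hyc⟩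
  rcases c with A | A <;> cases A <;> simp only [antecedent_left_cons, antecedent_right_cons,
    succedent_left_cons, succedent_right_cons]
  case left.and => exact .andL (by simpa using h _ .leftAnd)
  case right.and => exact .andR (by simpa using h _ .rightAnd₁) (by simpa using h _ .rightAnd₂)
  case left.or => exact .orL (by simpa using h _ .leftOr₁) (by simpa using h _ .leftOr₂)
  case right.or => exact .orR (by simpa using h _ .rightOr)
  case left.imp => exact .impL (by simpa using h _ .leftImp₁) (by simpa using h _ .leftImp₂)
  case right.imp => exact .impR (by simpa using h _ .rightImp)
  case right.all =>
    exact .allR (hfree (Finset.subset_insert _ _)) hfresh (by simpa using h _ (.rightAll hyL))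
  case left.ex =>
    exact .exL (hfree (Finset.subset_insert _ _)) hfresh (by simpa using h _ (.leftEx hyL))
  all_goals exact hc.elim

theorem derG_cons_of_isInstance (hd : c.IsInstance d)
    (h : DerG Rules n (antecedent (d ::ₘ c ::ₘ S)) (succedent (d ::ₘ c ::ₘ S))) :
    DerG Rules (n + 1) (antecedent (c ::ₘ S)) (succedent (c ::ₘ S)) := by
  cases hd with
  | all hfree =>
    simp only [antecedent_left_cons, succedent_left_cons] at h ⊢
    exact .allL hfree h
  | ex hfree =>
    simp only [antecedent_right_cons, succedent_right_cons] at h ⊢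
    rw [Multiset.cons_swap] at h
    exact .exR hfree h

end SignedSequent

/-! ### The calculus of signed sequents -/

open SignedFm SignedSequent in
/-- `SignedDer n S`: the signed sequent `S` has a derivation of height at most `n`. This is `G` with
its rules grouped into those that decompose their principal formula and those that repeat it, and
with cofinitely many premises in place of a single eigenvariable. -/
inductive SignedDer : ℕ → SignedSequent → Prop
  | initial {n : ℕ} {S : SignedSequent} (h : IsInitial S) : SignedDer n S
  | decompose {n : ℕ} {c : SignedFm} {S : SignedSequent} (L : Finset Tm) (hc : c.IsInvertible)
      (h : ∀ p, c.IsComponent L p → SignedDer n (p + S)) : SignedDer (n + 1) (c ::ₘ S)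
  | instantiate {n : ℕ} {c d : SignedFm} {S : SignedSequent} (hd : c.IsInstance d)
      (h : SignedDer n (d ::ₘ c ::ₘ S)) : SignedDer (n + 1) (c ::ₘ S)

namespace SignedDer

open SignedFm SignedSequent

variable {n : ℕ} {c : SignedFm} {S p : SignedSequent} {t u : Tm} {L : Finset Tm}

theorem succ (h : SignedDer n S) : SignedDer (n + 1) S := by
  induction h with
  | initial h => exact .initial h
  | decompose L hc _ ih => exact .decompose L hc ih
  | instantiate hd _ ih => exact .instantiate hd ih

theorem subst (u : Tm) (h : SignedDer n S) (ht : t ∉ boundVars S) :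
    SignedDer n (S.map (SignedFm.subst u t)) := by
  induction h with
  | initial h => exact .initial (h.map_subst u t)
  | @decompose n c S L hc _ ih =>
    have htc : t ∉ c.fm.boundVars := by simp_all [boundVars_cons]
    rw [Multiset.map_cons]
    refine .decompose (insert u (L ∪ c.fm.boundVars)) (hc.subst u t) fun p hp => ?_
    obtain ⟨q, hq, rfl⟩ := hp.exists_of_subst htc
    rw [← Multiset.map_add]
    exact ih q hq (Finset.notMem_mono (boundVars_add_subset hq S) ht)
  | @instantiate n c d S hd _ ih =>
    have htc : t ∉ c.fm.boundVars := by simp_all [boundVars_cons]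
    have hprem := ih (Finset.notMem_mono (boundVars_cons_cons_subset hd S) ht)
    simp only [Multiset.map_cons] at hprem ⊢
    exact .instantiate (hd.subst u htc) hprem

theorem subst_add (h : SignedDer n (p + S)) (hu : u ∉ ter S) (ht : t ∉ boundVars (p + S)) :
    SignedDer n (p.map (SignedFm.subst u t) + S) := by
  simpa [map_subst_of_notMem_ter t hu] using h.subst u ht

/-- The family `h` need not contain `p`, whose eigenvariable may lie in `L`; a premise with a fresh
eigenvariable is renamed instead. -/
theorem of_forall_isComponent (h : ∀ q, c.IsComponent L q → SignedDer n (q + S))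
    (hp : c.IsComponent (boundVars (c ::ₘ S)) p) : SignedDer n (p + S) := by
  obtain ⟨w, hw⟩ := Tm.exists_var_notMem (L ∪ c.fm.ter ∪ c.fm.boundVars ∪ ter S)
  simp only [Finset.mem_union, not_or] at hw
  obtain ⟨⟨⟨hwL, hwc⟩, hwb⟩, hwS⟩ := hw
  have hcS : c.fm.boundVars ⊆ boundVars (c ::ₘ S) := by simp [boundVars_cons]
  obtain ⟨v, hv, q, hq, rfl⟩ := hp.exists_map_subst_eq hwL hwc hwb hcS
  exact (h q hq).subst_add hwS (Finset.notMem_mono (boundVars_add_subset hq S) hv)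

theorem invert (h : SignedDer n (c ::ₘ S)) (hc : c.IsInvertible)
    (hp : c.IsComponent (boundVars (c ::ₘ S)) p) : SignedDer n (p + S) := by
  generalize hT : c ::ₘ S = T at h
  induction h generalizing S with
  | initial h =>
    subst hT
    refine .initial (h.of_atoms_subset fun d hd hatom => ?_)
    have hdc : d ≠ c := fun e => hc.not_isAtom (e ▸ hatom)
    exact Multiset.mem_add.2 (Or.inr ((Multiset.mem_cons.1 hd).resolve_left hdc))
  | @decompose n d T L hd h ih =>
    rcases Multiset.cons_eq_cons.1 hT with ⟨rfl, rfl⟩ | ⟨-, U, rfl, rfl⟩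
    · exact (of_forall_isComponent h hp).succ
    · rw [Multiset.add_cons]
      refine .decompose L hd fun q hq => ?_
      rw [add_left_comm]
      refine ih q hq (hp.anti ?_) (Multiset.add_cons c q U).symm
      rw [boundVars_cons, boundVars_cons]
      exact Finset.union_subset_union_right (boundVars_add_subset hq U)
  | @instantiate n d e T hd _ ih =>
    rcases Multiset.cons_eq_cons.1 hT with ⟨rfl, rfl⟩ | ⟨-, U, rfl, rfl⟩
    · exact absurd hc hd.not_isInvertible
    · rw [Multiset.add_cons]
      refine .instantiate hd ?_
      simp only [← Multiset.add_cons]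
      refine ih (hp.anti ?_) ?_
      · rw [boundVars_cons c, boundVars_cons c]
        exact Finset.union_subset_union_right (boundVars_cons_cons_subset hd U)
      · rw [Multiset.cons_swap c e, Multiset.cons_swap c d]

theorem of_forall_isComponent_cons (hc : c.IsInvertible)
    (h : ∀ q, c.IsComponent L q → SignedDer n (q + c ::ₘ S))
    (hp : c.IsComponent (boundVars (c ::ₘ c ::ₘ S)) p) : SignedDer n (p + (p + S)) := by
  have hpc : SignedDer n (p + c ::ₘ S) := of_forall_isComponent h hp
  rw [Multiset.add_cons] at hpc
  refine hpc.invert hc (hp.anti ?_)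
  rw [boundVars_cons, boundVars_cons c (c ::ₘ S)]
  exact Finset.union_subset_union_right (boundVars_add_subset hp S)

theorem contract (h : SignedDer n (c ::ₘ c ::ₘ S)) : SignedDer n (c ::ₘ S) := by
  induction n using Nat.strong_induction_on generalizing c S with
  | _ n ih =>
    generalize hT : c ::ₘ c ::ₘ S = T at h
    cases h with
    | initial h =>
      subst hT
      exact .initial (h.of_atoms_subset fun d hd _ => by simpa using hd)
    | @decompose n d T L hd h =>
      rcases cons_eq_cons_cons hT.symm with ⟨rfl, rfl⟩ | ⟨U, rfl, rfl⟩
      · refine .decompose (boundVars (d ::ₘ d ::ₘ S)) hd fun p hp => ?_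
        have hpp : SignedDer n (p + (p + S)) := of_forall_isComponent_cons hd h hp
        exact of_add_add_of_cons_cons (fun _ _ => ih n n.lt_succ_self) p S hpp
      · rw [Multiset.cons_swap]
        refine .decompose L hd fun p hp => ?_
        have hprem := h p hp
        rw [Multiset.add_cons, Multiset.add_cons] at hprem
        rw [Multiset.add_cons]
        exact ih n n.lt_succ_self hprem
    | @instantiate n d e T hd h =>
      rcases cons_eq_cons_cons hT.symm with ⟨rfl, rfl⟩ | ⟨U, rfl, rfl⟩
      · refine .instantiate hd ?_
        rw [Multiset.cons_swap e, Multiset.cons_swap e] at h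
        rw [Multiset.cons_swap]
        exact ih n n.lt_succ_self h
      · rw [Multiset.cons_swap]
        refine .instantiate hd ?_
        rw [Multiset.cons_swap d, Multiset.cons_swap d, Multiset.cons_swap e,
          Multiset.cons_swap e] at h
        rw [Multiset.cons_swap d, Multiset.cons_swap e]
        exact ih n n.lt_succ_self h

theorem rightAll {x y : ℕ} {A : Fm} (hfree : A.freeFor (.var y) (.var x))
    (hyA : .var y ∉ (Fm.all x A).ter) (hyS : .var y ∉ ter S)
    (h : SignedDer n (right (A.subst (.var x) (.var y)) ::ₘ S)) :
    SignedDer (n + 1) (right (.all x A) ::ₘ S) := by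
  refine .decompose (boundVars (right (.all x A) ::ₘ S)) trivial fun p hp => ?_
  cases hp with | @rightAll _ v _ hv =>
  have hvx : Tm.var v ≠ .var x := by
    intro e
    simp [e, boundVars_cons, fm, Fm.boundVars] at hv
  have hren : SignedDer n ({right ((A.subst (.var x) (.var y)).subst (.var y) (.var v))} + S) :=
    subst_add (p := {_}) h hyS
      (by simpa [boundVars_cons, fm, Fm.boundVars, Fm.boundVars_subst, hvx] using hv)
  rwa [Fm.subst_eigenvariable hfree hyA hvx] at hren

theorem leftEx {x y : ℕ} {A : Fm} (hfree : A.freeFor (.var y) (.var x))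
    (hyA : .var y ∉ (Fm.ex x A).ter) (hyS : .var y ∉ ter S)
    (h : SignedDer n (left (A.subst (.var x) (.var y)) ::ₘ S)) :
    SignedDer (n + 1) (left (.ex x A) ::ₘ S) := by
  refine .decompose (boundVars (left (.ex x A) ::ₘ S)) trivial fun p hp => ?_
  cases hp with | @leftEx _ v _ hv =>
  have hvx : Tm.var v ≠ .var x := by
    intro e
    simp [e, boundVars_cons, fm, Fm.boundVars] at hv
  have hren : SignedDer n ({left ((A.subst (.var x) (.var y)).subst (.var y) (.var v))} + S) :=
    subst_add (p := {_}) h hyS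
      (by simpa [boundVars_cons, fm, Fm.boundVars, Fm.boundVars_subst, hvx] using hv)
  rwa [Fm.subst_eigenvariable hfree hyA hvx] at hren

theorem of_derG {Γ Δ : Multiset Fm} (h : DerG ∅ n Γ Δ) : SignedDer n (ofSides Γ Δ) := by
  induction h with
  | ax hP => exact .initial (.inl ⟨_, hP, by simp [ofSides], by simp [ofSides]⟩)
  | botL => exact .initial (.inr (.inl (by simp [ofSides])))
  | topR => exact .initial (.inr (.inr (by simp [ofSides])))
  | geom hR => exact absurd hR (Set.notMem_empty _)
  | allL hfree _ ih =>
    simp only [ofSides_cons_left] at ih ⊢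
    exact .instantiate (.all hfree) ih
  | exR hfree _ ih =>
    simp only [ofSides_cons_right] at ih ⊢
    rw [Multiset.cons_swap] at ih
    exact .instantiate (.ex hfree) ih
  | allR hfree hy _ ih =>
    simp only [ofSides_cons_right] at ih ⊢
    rw [← ter_ofSides, Finset.notMem_union] at hy
    exact .rightAll hfree hy.2 hy.1 ih
  | exL hfree hy _ ih =>
    simp only [ofSides_cons_left] at ih ⊢
    rw [← ter_ofSides, Finset.notMem_union] at hy
    exact .leftEx hfree hy.2 hy.1 ih
  | impR _ ih =>
    rw [ofSides_cons_left, ofSides_cons_right] at ih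
    rw [ofSides_cons_right]
    refine .decompose ∅ trivial fun p hp => ?_
    cases hp
    simpa using ih
  | _ =>
    simp only [ofSides_cons_left, ofSides_cons_right] at *
    refine .decompose ∅ trivial fun p hp => ?_
    cases hp <;> simpa

theorem derG {Rules : Set GeomRule} (h : SignedDer n S) :
    DerG Rules n (antecedent S) (succedent S) := by
  induction h with
  | initial h => exact h.derG
  | decompose L hc _ ih => exact derG_cons_of_isInvertible hc ih
  | instantiate hd _ ih => exact derG_cons_of_isInstance hd ih

end SignedDer

theorem derG_iff_signedDer {n : ℕ} {Γ Δ : Multiset Fm} :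
    DerG ∅ n Γ Δ ↔ SignedDer n (SignedSequent.ofSides Γ Δ) := by
  refine ⟨.of_derG, fun h => ?_⟩
  simpa only [SignedSequent.antecedent_ofSides, SignedSequent.succedent_ofSides] using h.derG

/-- Height-preserving contraction in G: if A,A,Γ⇒Δ has a
derivation in G of height at most n then so does A,Γ⇒Δ; and if Γ⇒Δ,A,A has a
derivation in G of height at most n then so does Γ⇒Δ,A. -/
theorem heightPreservingContraction_G (n : ℕ) (A : Fm) (Γ Δ : Multiset Fm) :
    (DerG ∅ n (A ::ₘ A ::ₘ Γ) Δ → DerG ∅ n (A ::ₘ Γ) Δ) ∧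
    (DerG ∅ n Γ (A ::ₘ A ::ₘ Δ) → DerG ∅ n Γ (A ::ₘ Δ)) := by
  simp only [derG_iff_signedDer, SignedSequent.ofSides_cons_left, SignedSequent.ofSides_cons_right]
  exact ⟨.contract, .contract⟩
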